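/- Up to equivalence, there are exactly five 3-dimensional affine subspaces of the 3×3 matrices over F2 that consist entirely of invertible matrices, namely the affine subspaces I3 + H where H is one of the following five linear subspaces: the strictly upper-triangular 3×3 matrices over F2; {[[0,a,x],[a,a,y],[0,0,0]] : a,x,y ∈ F2}; {[[0,x,y],[0,0,a],[0,a,a]] : a,x,y ∈ F2}; T1 = {[[a,b,a],[a,a,c],[b+c,a,a]] : a,b,c ∈ F2}; and T2 = {[[a,b,a],[a,a,c],[0,a,a]] : a,b,c ∈ F2}. That is, each of these five affine subspaces is 3-dimensional and contained in GL3(F2), they are pairwise inequivalent, and every 3-dimensional affine subspace of the 3×3 matrices over F2 contained in GL3(F2) is equivalent to one of them. -/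

import Mathlib

open Matrix

/-- The space of strictly upper-triangular `3 × 3` matrices over `F2`. -/
def NT3 : Submodule (ZMod 2) (Matrix (Fin 3) (Fin 3) (ZMod 2)) where
  carrier := {M | ∀ i j : Fin 3, j ≤ i → M i j = 0}
  add_mem' := by
    intro M N hM hN i j h
    simp [Matrix.add_apply, hM i j h, hN i j h]
  zero_mem' := fun i j _ => rfl
  smul_mem' := by
    intro c M hM i j h
    simp [Matrix.smul_apply, hM i j h]

/-- The matrices `!![0, a, x; a, a, y; 0, 0, 0]` (this is `F2·C ∨ 0`). -/
def SpaceW2 : Submodule (ZMod 2) (Matrix (Fin 3) (Fin 3) (ZMod 2)) where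
  carrier := {M | ∃ a x y : ZMod 2, M = !![0, a, x; a, a, y; 0, 0, 0]}
  add_mem' := by
    rintro M N ⟨a, x, y, rfl⟩ ⟨a', x', y', rfl⟩
    exact ⟨a + a', x + x', y + y', by revert a x y a' x' y'; decide⟩
  zero_mem' := ⟨0, 0, 0, by decide⟩
  smul_mem' := by
    rintro k M ⟨a, x, y, rfl⟩
    exact ⟨k * a, k * x, k * y, by revert k a x y; decide⟩

/-- The matrices `!![0, x, y; 0, 0, a; 0, a, a]` (this is `0 ∨ F2·C`). -/
def SpaceW3 : Submodule (ZMod 2) (Matrix (Fin 3) (Fin 3) (ZMod 2)) where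
  carrier := {M | ∃ a x y : ZMod 2, M = !![0, x, y; 0, 0, a; 0, a, a]}
  add_mem' := by
    rintro M N ⟨a, x, y, rfl⟩ ⟨a', x', y', rfl⟩
    exact ⟨a + a', x + x', y + y', by revert a x y a' x' y'; decide⟩
  zero_mem' := ⟨0, 0, 0, by decide⟩
  smul_mem' := by
    rintro k M ⟨a, x, y, rfl⟩
    exact ⟨k * a, k * x, k * y, by revert k a x y; decide⟩

/-- `T1`: the matrices `!![a, b, a; a, a, c; b + c, a, a]`. -/
def SpaceT1 : Submodule (ZMod 2) (Matrix (Fin 3) (Fin 3) (ZMod 2)) where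
  carrier := {M | ∃ a b c : ZMod 2, M = !![a, b, a; a, a, c; b + c, a, a]}
  add_mem' := by
    rintro M N ⟨a, b, c, rfl⟩ ⟨a', b', c', rfl⟩
    exact ⟨a + a', b + b', c + c', by revert a b c a' b' c'; decide⟩
  zero_mem' := ⟨0, 0, 0, by decide⟩
  smul_mem' := by
    rintro k M ⟨a, b, c, rfl⟩
    exact ⟨k * a, k * b, k * c, by revert k a b c; decide⟩

/-- `T2`: the matrices `!![a, b, a; a, a, c; 0, a, a]`. -/
def SpaceT2 : Submodule (ZMod 2) (Matrix (Fin 3) (Fin 3) (ZMod 2)) where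
  carrier := {M | ∃ a b c : ZMod 2, M = !![a, b, a; a, a, c; 0, a, a]}
  add_mem' := by
    rintro M N ⟨a, b, c, rfl⟩ ⟨a', b', c', rfl⟩
    exact ⟨a + a', b + b', c + c', by revert a b c a' b' c'; decide⟩
  zero_mem' := ⟨0, 0, 0, by decide⟩
  smul_mem' := by
    rintro k M ⟨a, b, c, rfl⟩
    exact ⟨k * a, k * b, k * c, by revert k a b c; decide⟩

/-- Two affine subspaces of square matrices (given as sets) are *equivalent* when one is
obtained from the other by multiplying on the left and on the right by fixed invertible
matrices. -/
def AffEquiv (S₁ S₂ : Set (Matrix (Fin 3) (Fin 3) (ZMod 2))) : Prop :=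
  ∃ P Q : Matrix (Fin 3) (Fin 3) (ZMod 2), IsUnit P ∧ IsUnit Q ∧
    S₂ = (fun M => P * M * Q) '' S₁

/-- A set of matrices is a 3-dimensional affine subspace when it is a coset of a
3-dimensional linear subspace. -/
def IsAffine3 (S : Set (Matrix (Fin 3) (Fin 3) (ZMod 2))) : Prop :=
  ∃ (A : Matrix (Fin 3) (Fin 3) (ZMod 2))
    (H : Submodule (ZMod 2) (Matrix (Fin 3) (Fin 3) (ZMod 2))),
    Module.finrank (ZMod 2) H = 3 ∧ S = (fun M => A + M) '' (H : Set (Matrix (Fin 3) (Fin 3) (ZMod 2)))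

/-- The coset `I₃ + H` of a linear subspace `H`. -/
def affOf (H : Submodule (ZMod 2) (Matrix (Fin 3) (Fin 3) (ZMod 2))) :
    Set (Matrix (Fin 3) (Fin 3) (ZMod 2)) :=
  (fun M => 1 + M) '' (H : Set (Matrix (Fin 3) (Fin 3) (ZMod 2)))

/-- The five translation spaces of the classification. -/
def transList : List (Submodule (ZMod 2) (Matrix (Fin 3) (Fin 3) (ZMod 2))) :=
  [NT3, SpaceW2, SpaceW3, SpaceT1, SpaceT2]

/-!
Equivalent affine spaces have translation spaces related by some `M ↦ P M Q`, which preserves having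
a common right kernel vector, having a common left kernel vector, and containing a matrix of rank
one. These three properties distinguish the five models.

Conversely, let `A + H` consist of invertible matrices. Two matrices of `H` killing `x`, together
with their sum, always include one of the form `(A x) ψ`.

* If `H` has a common right kernel vector, then modulo such rows it is spanned by one matrix, whose
  conjugacy class separates `NT3` from `SpaceW3`. Transposition treats common left kernel vectors.
* If `H` has no common kernel vector but contains a matrix of rank one, it contains two with
  independent columns and independent rows, say `E₁₁` and `E₂₂`. The determinant condition then
  leaves two shapes for the elements of `A + H`, and `H` is equivalent to `SpaceT2`.
* If `H` has neither, then each `x ≠ 0` is killed by exactly one nonzero `κ x ∈ H`, and `κ` is a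
  bijection. If `κ` were additive, then `κ x` would be `y ↦ G (x × y)`, and no `A` would be
  compatible with this. Otherwise `κ x + κ y = κ z` for a basis `x, y, z`, in which `κ x` and `κ y`
  become diagonal, and `H` is equivalent to `SpaceT1`.
-/

/-! ### Two-sided multiplication and its invariants -/

section TwoSided

variable {n R : Type*} [CommRing R]

/-- `H` contains a matrix of rank one, given as the product of a column and a row. -/
def HasRankOne (H : Submodule R (Matrix n n R)) : Prop :=
  ∃ u φ : n → R, u ≠ 0 ∧ φ ≠ 0 ∧ vecMulVec u φ ∈ H

lemma hasRankOne_of_vecMulVec_mem {H : Submodule R (Matrix n n R)} {u φ : n → R}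
    (h : vecMulVec u φ ∈ H) (h0 : vecMulVec u φ ≠ 0) : HasRankOne H := by
  refine ⟨u, φ, ?_, ?_, h⟩ <;> rintro rfl <;> simp at h0

/-- The space of the transposes of the matrices of `H`. -/
abbrev transposeSpace (H : Submodule R (Matrix n n R)) : Submodule R (Matrix n n R) :=
  H.map (transposeLinearEquiv n n R R : Matrix n n R →ₗ[R] Matrix n n R)

lemma mem_transposeSpace {H : Submodule R (Matrix n n R)} {M : Matrix n n R} :
    M ∈ transposeSpace H ↔ Mᵀ ∈ H :=
  Submodule.mem_map_equiv _

lemma hasRankOne_transposeSpace {H : Submodule R (Matrix n n R)} :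
    HasRankOne (transposeSpace H) ↔ HasRankOne H := by
  simp only [HasRankOne, mem_transposeSpace, transpose_vecMulVec]
  rw [exists_comm]
  simp only [and_left_comm]

variable [Fintype n]

/-- The matrices of `H` share a nonzero kernel vector. -/
def HasRightKernel (H : Submodule R (Matrix n n R)) : Prop :=
  ∃ x : n → R, x ≠ 0 ∧ ∀ M ∈ H, M *ᵥ x = 0

/-- The matrices of `H` share a nonzero left kernel vector. -/
def HasLeftKernel (H : Submodule R (Matrix n n R)) : Prop :=
  ∃ y : n → R, y ≠ 0 ∧ ∀ M ∈ H, y ᵥ* M = 0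

lemma hasRightKernel_transposeSpace {H : Submodule R (Matrix n n R)} :
    HasRightKernel (transposeSpace H) ↔ HasLeftKernel H := by
  refine exists_congr fun x => and_congr_right fun _ => ⟨fun h M hM => ?_, fun h M hM => ?_⟩
  · rw [← mulVec_transpose]
    exact h Mᵀ (mem_transposeSpace.2 hM)
  · rw [← vecMul_transpose]
    exact h Mᵀ (mem_transposeSpace.1 hM)

lemma hasRightKernel_span {s : Set (Matrix n n R)} :
    HasRightKernel (Submodule.span R s) ↔ ∃ x : n → R, x ≠ 0 ∧ ∀ M ∈ s, M *ᵥ x = 0 := by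
  refine exists_congr fun x => and_congr_right fun _ => ?_
  exact Submodule.span_le (p := LinearMap.ker ((mulVecBilin R R).flip x))

lemma hasLeftKernel_span {s : Set (Matrix n n R)} :
    HasLeftKernel (Submodule.span R s) ↔ ∃ y : n → R, y ≠ 0 ∧ ∀ M ∈ s, y ᵥ* M = 0 := by
  refine exists_congr fun y => and_congr_right fun _ => ?_
  exact Submodule.span_le (p := LinearMap.ker (vecMulBilin R R y))

variable [DecidableEq n]

/-- The linear automorphism `M ↦ P M Q` of the space of matrices, for invertible `P` and `Q`. -/
def twoSided (P Q : (Matrix n n R)ˣ) : Matrix n n R ≃ₗ[R] Matrix n n R :=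
  LinearEquiv.ofLinearMap (LinearMap.mulLeftRight R (P.val, Q.val))
    (LinearMap.mulLeftRight R (P⁻¹.val, Q⁻¹.val))
    (by ext1 M; simp [mul_assoc]) (by ext1 M; simp [mul_assoc])

@[simp]
lemma twoSided_apply (P Q : (Matrix n n R)ˣ) (M : Matrix n n R) :
    twoSided P Q M = P * M * Q := by
  simp [twoSided]

/-- The image of the space `H` under `M ↦ P M Q`. -/
abbrev twoSidedMap (P Q : (Matrix n n R)ˣ) (H : Submodule R (Matrix n n R)) :
    Submodule R (Matrix n n R) :=
  H.map (twoSided P Q : Matrix n n R →ₗ[R] Matrix n n R)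

lemma mul_mul_mem_twoSidedMap {P Q : (Matrix n n R)ˣ} {H : Submodule R (Matrix n n R)}
    {M : Matrix n n R} (hM : M ∈ H) : P * M * Q ∈ twoSidedMap P Q H :=
  ⟨M, hM, twoSided_apply P Q M⟩

lemma twoSidedMap_inv_twoSidedMap (P Q : (Matrix n n R)ˣ) (H : Submodule R (Matrix n n R)) :
    twoSidedMap P⁻¹ Q⁻¹ (twoSidedMap P Q H) = H := by
  rw [twoSidedMap, twoSidedMap, ← Submodule.map_comp]
  convert Submodule.map_id H
  ext1 M
  simp [mul_assoc]

lemma HasRightKernel.twoSidedMap {H : Submodule R (Matrix n n R)} (h : HasRightKernel H)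
    (P Q : (Matrix n n R)ˣ) : HasRightKernel (twoSidedMap P Q H) := by
  obtain ⟨x, hx, hH⟩ := h
  refine ⟨Q⁻¹.val *ᵥ x, fun h0 => hx ?_, ?_⟩
  · simpa using congrArg (Q.val *ᵥ ·) h0
  · rintro _ ⟨M, hM, rfl⟩
    calc
      twoSided P Q M *ᵥ (Q⁻¹.val *ᵥ x) = P.val *ᵥ (M *ᵥ x) := by
        simp only [twoSided_apply, mulVec_mulVec, mul_assoc, Units.mul_inv, mul_one]
      _ = 0 := by rw [hH M hM, mulVec_zero]

lemma HasLeftKernel.twoSidedMap {H : Submodule R (Matrix n n R)} (h : HasLeftKernel H)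
    (P Q : (Matrix n n R)ˣ) : HasLeftKernel (twoSidedMap P Q H) := by
  obtain ⟨y, hy, hH⟩ := h
  refine ⟨y ᵥ* P⁻¹.val, fun h0 => hy ?_, ?_⟩
  · simpa using congrArg (· ᵥ* P.val) h0
  · rintro _ ⟨M, hM, rfl⟩
    calc
      (y ᵥ* P⁻¹.val) ᵥ* twoSided P Q M = (y ᵥ* M) ᵥ* Q.val := by
        simp only [twoSided_apply, vecMul_vecMul, ← mul_assoc, Units.inv_mul, one_mul]
      _ = 0 := by rw [hH M hM, zero_vecMul]

lemma HasRankOne.twoSidedMap {H : Submodule R (Matrix n n R)} (h : HasRankOne H)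
    (P Q : (Matrix n n R)ˣ) : HasRankOne (twoSidedMap P Q H) := by
  obtain ⟨u, φ, hu, hφ, hH⟩ := h
  refine ⟨P.val *ᵥ u, φ ᵥ* Q.val, fun h0 => hu ?_, fun h0 => hφ ?_, ?_⟩
  · simpa using congrArg (P⁻¹.val *ᵥ ·) h0
  · simpa using congrArg (· ᵥ* Q⁻¹.val) h0
  · rw [← vecMulVec_mul, ← mul_vecMulVec]
    exact mul_mul_mem_twoSidedMap hH

lemma hasRightKernel_twoSidedMap {P Q : (Matrix n n R)ˣ} {H : Submodule R (Matrix n n R)} :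
    HasRightKernel (twoSidedMap P Q H) ↔ HasRightKernel H :=
  ⟨fun h => twoSidedMap_inv_twoSidedMap P Q H ▸ h.twoSidedMap P⁻¹ Q⁻¹, fun h => h.twoSidedMap P Q⟩

lemma hasLeftKernel_twoSidedMap {P Q : (Matrix n n R)ˣ} {H : Submodule R (Matrix n n R)} :
    HasLeftKernel (twoSidedMap P Q H) ↔ HasLeftKernel H :=
  ⟨fun h => twoSidedMap_inv_twoSidedMap P Q H ▸ h.twoSidedMap P⁻¹ Q⁻¹, fun h => h.twoSidedMap P Q⟩

lemma hasRankOne_twoSidedMap {P Q : (Matrix n n R)ˣ} {H : Submodule R (Matrix n n R)} :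
    HasRankOne (twoSidedMap P Q H) ↔ HasRankOne H :=
  ⟨fun h => twoSidedMap_inv_twoSidedMap P Q H ▸ h.twoSidedMap P⁻¹ Q⁻¹, fun h => h.twoSidedMap P Q⟩

end TwoSided

/-! ### Affine spaces of invertible matrices -/

/-- The `3 × 3` matrices over `F2`. -/
abbrev Mat3 := Matrix (Fin 3) (Fin 3) (ZMod 2)

/-- The vectors on which `Mat3` acts, as columns from the left and as rows from the right. -/
abbrev Vec3 := Fin 3 → ZMod 2

lemma zmod_two_eq_one {a : ZMod 2} (ha : a ≠ 0) : a = 1 :=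
  Fin.eq_one_of_ne_zero a ha

lemma isUnit_iff_det_eq_one {n : Type*} [Fintype n] [DecidableEq n] {M : Matrix n n (ZMod 2)} :
    IsUnit M ↔ M.det = 1 := by
  rw [isUnit_iff_isUnit_det, isUnit_iff_ne_zero]
  exact ⟨zmod_two_eq_one, fun h => h ▸ one_ne_zero⟩

/-- The affine space `A + H`. -/
def affineCoset (A : Mat3) (H : Submodule (ZMod 2) Mat3) : Set Mat3 :=
  (fun M => A + M) '' (H : Set Mat3)

lemma affineCoset_one (H : Submodule (ZMod 2) Mat3) : affineCoset 1 H = affOf H := rfl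

lemma affineCoset_eq_of_sub_mem {A B : Mat3} {H : Submodule (ZMod 2) Mat3} (h : A - B ∈ H) :
    affineCoset A H = affineCoset B H := by
  ext M
  simp only [affineCoset, Set.mem_image, SetLike.mem_coe]
  constructor
  · rintro ⟨N, hN, rfl⟩
    exact ⟨A - B + N, add_mem h hN, by abel⟩
  · rintro ⟨N, hN, rfl⟩
    exact ⟨N - (A - B), sub_mem hN h, by abel⟩

/-- `A + H` is a three-dimensional affine space of invertible matrices; over `F2`, invertible means
of determinant one. -/
structure IsInvertibleCoset (A : Mat3) (H : Submodule (ZMod 2) Mat3) : Prop where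
  finrank_eq : Module.finrank (ZMod 2) H = 3
  det_add : ∀ M ∈ H, (A + M).det = 1

/-- `A + H` is equivalent to one of the five model spaces. -/
def IsClassified (A : Mat3) (H : Submodule (ZMod 2) Mat3) : Prop :=
  ∃ T ∈ transList, AffEquiv (affineCoset A H) (affOf T)

lemma AffEquiv.trans {S T U : Set Mat3} (h : AffEquiv S T) (h' : AffEquiv T U) : AffEquiv S U := by
  obtain ⟨P, Q, hP, hQ, rfl⟩ := h
  obtain ⟨P', Q', hP', hQ', rfl⟩ := h'
  refine ⟨P' * P, Q * Q', hP'.mul hP, hQ.mul hQ', ?_⟩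
  simp only [Set.image_image, mul_assoc]

lemma AffEquiv.transpose {S T : Set Mat3} (h : AffEquiv S T) :
    AffEquiv (Matrix.transpose '' S) (Matrix.transpose '' T) := by
  obtain ⟨P, Q, hP, hQ, rfl⟩ := h
  refine ⟨Qᵀ, Pᵀ, (isUnit_transpose Q).2 hQ, (isUnit_transpose P).2 hP, ?_⟩
  simp only [Set.image_image, transpose_mul, mul_assoc]

lemma affEquiv_affineCoset_twoSided (P Q : Mat3ˣ) (A : Mat3) (H : Submodule (ZMod 2) Mat3) :
    AffEquiv (affineCoset A H) (affineCoset (P * A * Q) (twoSidedMap P Q H)) := by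
  refine ⟨P, Q, P.isUnit, Q.isUnit, ?_⟩
  simp only [affineCoset, Submodule.map_coe, Set.image_image, LinearEquiv.coe_coe, twoSided_apply,
    mul_add, add_mul]

lemma transpose_image_affineCoset (A : Mat3) (H : Submodule (ZMod 2) Mat3) :
    Matrix.transpose '' affineCoset A H = affineCoset Aᵀ (transposeSpace H) := by
  simp only [affineCoset, Submodule.map_coe, Set.image_image, transpose_add]
  rfl

namespace IsClassified

variable {A B : Mat3} {H : Submodule (ZMod 2) Mat3}

lemma of_twoSided (P Q : Mat3ˣ) (h : IsClassified (P * A * Q) (twoSidedMap P Q H)) :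
    IsClassified A H := by
  obtain ⟨T, hT, hAT⟩ := h
  exact ⟨T, hT, (affEquiv_affineCoset_twoSided P Q A H).trans hAT⟩

lemma of_one_sub_mem {T : Submodule (ZMod 2) Mat3} (hT : T ∈ transList) (hA : A - 1 ∈ T) :
    IsClassified A T := by
  refine ⟨T, hT, 1, 1, isUnit_one, isUnit_one, ?_⟩
  simp only [affineCoset_eq_of_sub_mem hA, one_mul, mul_one, Set.image_id']
  rfl

lemma of_sub_mem (hAB : A - B ∈ H) (h : IsClassified B H) : IsClassified A H := by
  rwa [IsClassified, affineCoset_eq_of_sub_mem hAB]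

end IsClassified

namespace IsInvertibleCoset

variable {A : Mat3} {H : Submodule (ZMod 2) Mat3}

lemma det_eq_one (h : IsInvertibleCoset A H) : A.det = 1 := by
  simpa using h.det_add 0 H.zero_mem

lemma isUnit (h : IsInvertibleCoset A H) : IsUnit A :=
  isUnit_iff_det_eq_one.2 h.det_eq_one

lemma transpose (h : IsInvertibleCoset A H) : IsInvertibleCoset Aᵀ (transposeSpace H) where
  finrank_eq := (LinearEquiv.finrank_map_eq _ H).trans h.finrank_eq
  det_add := by
    rintro _ ⟨M, hM, rfl⟩
    simpa [← transpose_add] using h.det_add M hM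

lemma twoSidedMap (h : IsInvertibleCoset A H) (P Q : Mat3ˣ) :
    IsInvertibleCoset (P * A * Q) (twoSidedMap P Q H) where
  finrank_eq := (LinearEquiv.finrank_map_eq _ H).trans h.finrank_eq
  det_add := by
    rintro _ ⟨M, hM, rfl⟩
    have hAM : IsUnit (A + M) := isUnit_iff_det_eq_one.2 (h.det_add M hM)
    simpa [mul_add, add_mul] using
      isUnit_iff_det_eq_one.1 ((P.isUnit.mul hAM).mul Q.isUnit)

lemma add_mem (h : IsInvertibleCoset A H) {N : Mat3} (hN : N ∈ H) :
    IsInvertibleCoset (A + N) H where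
  finrank_eq := h.finrank_eq
  det_add M hM := by
    rw [add_assoc]
    exact h.det_add _ (H.add_mem hN hM)

end IsInvertibleCoset

/-! ### The five models -/

/-- Bases of the five spaces of `transList`, in the same order. -/
def modelBasis : Fin 5 → Fin 3 → Mat3 :=
  ![![!![0, 1, 0; 0, 0, 0; 0, 0, 0], !![0, 0, 1; 0, 0, 0; 0, 0, 0], !![0, 0, 0; 0, 0, 1; 0, 0, 0]],
    ![!![0, 1, 0; 1, 1, 0; 0, 0, 0], !![0, 0, 1; 0, 0, 0; 0, 0, 0], !![0, 0, 0; 0, 0, 1; 0, 0, 0]],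
    ![!![0, 0, 0; 0, 0, 1; 0, 1, 1], !![0, 1, 0; 0, 0, 0; 0, 0, 0], !![0, 0, 1; 0, 0, 0; 0, 0, 0]],
    ![!![1, 0, 1; 1, 1, 0; 0, 1, 1], !![0, 1, 0; 0, 0, 0; 1, 0, 0], !![0, 0, 0; 0, 0, 1; 1, 0, 0]],
    ![!![1, 0, 1; 1, 1, 0; 0, 1, 1], !![0, 1, 0; 0, 0, 0; 0, 0, 0], !![0, 0, 0; 0, 0, 1; 0, 0, 0]]]

/-- The entries of `transList`, each as the span of an explicit basis. -/
def model (t : Fin 5) : Submodule (ZMod 2) Mat3 :=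
  Submodule.span (ZMod 2) (Set.range (modelBasis t))

lemma mem_model {t : Fin 5} {M : Mat3} :
    M ∈ model t ↔ ∃ c : Fin 3 → ZMod 2, ∑ i, c i • modelBasis t i = M :=
  Submodule.mem_span_range_iff_exists_fun _

lemma linearIndependent_modelBasis (t : Fin 5) : LinearIndependent (ZMod 2) (modelBasis t) := by
  rw [Fintype.linearIndependent_iff]
  revert t
  decide +kernel

lemma finrank_model (t : Fin 5) : Module.finrank (ZMod 2) (model t) = 3 :=
  finrank_span_eq_card (linearIndependent_modelBasis t)

lemma det_one_add_eq_one_of_mem_model {t : Fin 5} {M : Mat3} (hM : M ∈ model t) :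
    (1 + M).det = 1 := by
  obtain ⟨c, rfl⟩ := mem_model.1 hM
  rw [det_fin_three]
  clear hM
  revert t c
  decide +kernel

lemma mem_nt3_iff {M : Mat3} : M ∈ NT3 ↔ ∃ a b c : ZMod 2, M = !![0, a, b; 0, 0, c; 0, 0, 0] := by
  constructor
  · intro hM
    refine ⟨M 0 1, M 0 2, M 1 2, ?_⟩
    conv_lhs => rw [eta_fin_three M]
    rw [hM 0 0 le_rfl, hM 1 0 (by decide), hM 1 1 le_rfl, hM 2 0 (by decide), hM 2 1 (by decide),
      hM 2 2 le_rfl]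
  · rintro ⟨a, b, c, rfl⟩ i j hij
    fin_cases i <;> fin_cases j <;> first | rfl | exact absurd hij (by decide)

lemma eq_model_of_forall_mem_iff {T : Submodule (ZMod 2) Mat3} {t : Fin 5}
    {f : ZMod 2 → ZMod 2 → ZMod 2 → Mat3} (hT : ∀ M, M ∈ T ↔ ∃ a b c, M = f a b c)
    (hf : ∀ a b c, f a b c = ∑ i, ![a, b, c] i • modelBasis t i) : T = model t := by
  ext M
  rw [hT, mem_model]
  constructor
  · rintro ⟨a, b, c, rfl⟩
    exact ⟨![a, b, c], (hf a b c).symm⟩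
  · rintro ⟨x, rfl⟩
    refine ⟨x 0, x 1, x 2, ?_⟩
    rw [hf, ← FinVec.etaExpand_eq x]
    rfl

lemma transList_eq_ofFn_model : transList = List.ofFn model := by
  have h0 : NT3 = model 0 := eq_model_of_forall_mem_iff (fun _ => mem_nt3_iff) (by decide +kernel)
  have h1 : SpaceW2 = model 1 := eq_model_of_forall_mem_iff (fun _ => Iff.rfl) (by decide +kernel)
  have h2 : SpaceW3 = model 2 := eq_model_of_forall_mem_iff (fun _ => Iff.rfl) (by decide +kernel)
  have h3 : SpaceT1 = model 3 := eq_model_of_forall_mem_iff (fun _ => Iff.rfl) (by decide +kernel)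
  have h4 : SpaceT2 = model 4 := eq_model_of_forall_mem_iff (fun _ => Iff.rfl) (by decide +kernel)
  rw [transList, h0, h1, h2, h3, h4]
  rfl

lemma finrank_eq_three_of_mem_transList {T : Submodule (ZMod 2) Mat3} (hT : T ∈ transList) :
    Module.finrank (ZMod 2) T = 3 := by
  rw [transList_eq_ofFn_model, List.mem_ofFn] at hT
  obtain ⟨t, rfl⟩ := hT
  exact finrank_model t

lemma isUnit_of_mem_affOf {T : Submodule (ZMod 2) Mat3} (hT : T ∈ transList) {M : Mat3}
    (hM : M ∈ affOf T) : IsUnit M := by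
  rw [transList_eq_ofFn_model, List.mem_ofFn] at hT
  obtain ⟨t, rfl⟩ := hT
  obtain ⟨N, hN, rfl⟩ := hM
  exact isUnit_iff_det_eq_one.2 (det_one_add_eq_one_of_mem_model hN)

lemma hasRightKernel_model {t : Fin 5} : HasRightKernel (model t) ↔ t = 0 ∨ t = 2 := by
  rw [model, hasRightKernel_span]
  simp only [Set.forall_mem_range]
  revert t
  decide +kernel

lemma hasLeftKernel_model {t : Fin 5} : HasLeftKernel (model t) ↔ t = 0 ∨ t = 1 := by
  rw [model, hasLeftKernel_span]
  simp only [Set.forall_mem_range]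
  revert t
  decide +kernel

lemma hasRankOne_model {t : Fin 5} : HasRankOne (model t) ↔ t ≠ 3 := by
  simp only [HasRankOne, mem_model]
  revert t
  decide +kernel

lemma exists_eq_twoSidedMap_of_affEquiv {H K : Submodule (ZMod 2) Mat3}
    (h : AffEquiv (affOf H) (affOf K)) : ∃ P Q : Mat3ˣ, K = twoSidedMap P Q H := by
  obtain ⟨_, _, ⟨P, rfl⟩, ⟨Q, rfl⟩, hPQ⟩ := h
  refine ⟨P, Q, ?_⟩
  have hmem (M : Mat3) : 1 + M ∈ affOf K ↔ M ∈ K := by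
    simp only [affOf, Set.mem_image, SetLike.mem_coe, add_right_inj, exists_eq_right]
  have hsub : P.val * Q.val - 1 ∈ K := by
    rw [← hmem, hPQ]
    exact ⟨1, ⟨0, H.zero_mem, by simp⟩, by simp⟩
  ext M
  have hshift : 1 + (P.val * Q.val - 1 + M) = P * (1 + P⁻¹.val * M * Q⁻¹) * Q := by
    have hcancel : P.val * (P⁻¹.val * M * Q⁻¹) * Q = M := by simp [mul_assoc]
    rw [mul_add, mul_one, add_mul, hcancel]
    abel
  calc
    M ∈ K ↔ 1 + (P.val * Q.val - 1 + M) ∈ affOf K := by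
      rw [hmem, K.add_mem_iff_right hsub]
    _ ↔ P⁻¹.val * M * Q⁻¹ ∈ H := by
      rw [hPQ, hshift, affOf, Set.image_image]
      simp [Units.mul_left_inj, Units.mul_right_inj]
    _ ↔ M ∈ twoSidedMap P Q H := by
      rw [Submodule.mem_map_equiv]
      rfl

lemma eq_of_affEquiv_affOf_model {s t : Fin 5} (h : AffEquiv (affOf (model s)) (affOf (model t))) :
    s = t := by
  obtain ⟨P, Q, hPQ⟩ := exists_eq_twoSidedMap_of_affEquiv h
  have hright : (t = 0 ∨ t = 2) ↔ (s = 0 ∨ s = 2) := by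
    rw [← hasRightKernel_model, ← hasRightKernel_model, hPQ, hasRightKernel_twoSidedMap]
  have hleft : (t = 0 ∨ t = 1) ↔ (s = 0 ∨ s = 1) := by
    rw [← hasLeftKernel_model, ← hasLeftKernel_model, hPQ, hasLeftKernel_twoSidedMap]
  have hrank : t ≠ 3 ↔ s ≠ 3 := by
    rw [← hasRankOne_model, ← hasRankOne_model, hPQ, hasRankOne_twoSidedMap]
  clear h hPQ
  revert s t
  decide

lemma pairwise_not_affEquiv_transList :
    (transList.map affOf).Pairwise (fun S T => ¬ AffEquiv S T) := by
  rw [transList_eq_ofFn_model, List.map_ofFn, List.pairwise_ofFn]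
  exact fun s t hst h => hst.ne (eq_of_affEquiv_affOf_model h)

/-! ### Two matrices with a common kernel vector -/

lemma exists_unit_mulVec_single_eq {n R : Type*} [CommRing R] [Fintype n] [DecidableEq n]
    {b : n → n → R} (hb : IsUnit (of b).det) :
    ∃ Q : (Matrix n n R)ˣ, ∀ i, Q.val *ᵥ Pi.single i 1 = b i := by
  rw [← det_transpose, ← isUnit_iff_isUnit_det] at hb
  obtain ⟨Q, hQ⟩ := hb
  refine ⟨Q, fun i => ?_⟩
  rw [hQ, mulVec_single_one]
  rfl

lemma exists_unit_mulVec_single_zero_eq {x : Vec3} (hx : x ≠ 0) :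
    ∃ Q : Mat3ˣ, Q.val *ᵥ Pi.single 0 1 = x := by
  have hbasis : ∀ x : Vec3, x ≠ 0 → ∃ y z : Vec3, (of ![x, y, z]).det = 1 := by
    simp only [det_fin_three]
    decide +kernel
  obtain ⟨y, z, hdet⟩ := hbasis x hx
  obtain ⟨Q, hQ⟩ := exists_unit_mulVec_single_eq (hdet ▸ isUnit_one)
  exact ⟨Q, hQ 0⟩

lemma det_one_add_of_mulVec_single_zero {R : Type*} [CommRing R] {n : ℕ}
    {N : Matrix (Fin (n + 1)) (Fin (n + 1)) R} (hN : N *ᵥ Pi.single 0 1 = 0) :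
    (1 + N).det = (1 + N.submatrix Fin.succ Fin.succ).det := by
  have hcol (i : Fin (n + 1)) : N i 0 = 0 := by
    simpa using congrFun hN i
  rw [det_succ_column_zero, Fin.sum_univ_succ, Finset.sum_eq_zero]
  · have hminor : (1 + N).submatrix Fin.succ Fin.succ = 1 + N.submatrix Fin.succ Fin.succ := by
      rw [submatrix_add, Pi.add_apply, Pi.add_apply, submatrix_one _ (Fin.succ_injective n)]
    simp [hcol, hminor]
  · intro i _
    simp [hcol]

lemma eq_vecMulVec_single_zero_of_submatrix_eq_zero {R : Type*} [CommRing R] {n : ℕ}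
    {N : Matrix (Fin (n + 1)) (Fin (n + 1)) R} (hN : N *ᵥ Pi.single 0 1 = 0)
    (h : N.submatrix Fin.succ Fin.succ = 0) : N = vecMulVec (Pi.single 0 1) (N 0) := by
  ext i j
  rw [vecMulVec_apply]
  rcases Fin.eq_zero_or_eq_succ i with rfl | ⟨i, rfl⟩
  · simp
  · rcases Fin.eq_zero_or_eq_succ j with rfl | ⟨j, rfl⟩
    · simpa using congrFun hN i.succ
    · simpa using congrFun₂ h i j

lemma eq_zero_or_eq_zero_or_add_eq_zero_of_det_one_add {K L : Matrix (Fin 2) (Fin 2) (ZMod 2)}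
    (hK : (1 + K).det = 1) (hL : (1 + L).det = 1) (hKL : (1 + (K + L)).det = 1) :
    K = 0 ∨ L = 0 ∨ K + L = 0 := by
  rw [det_fin_two] at hK hL hKL
  revert K L
  decide +kernel

lemma exists_eq_vecMulVec_of_mulVec_single_zero {N N' : Mat3} (hN : N *ᵥ Pi.single 0 1 = 0)
    (hN' : N' *ᵥ Pi.single 0 1 = 0) (h : (1 + N).det = 1) (h' : (1 + N').det = 1)
    (hadd : (1 + (N + N')).det = 1) :
    ∃ ψ, N = vecMulVec (Pi.single 0 1) ψ ∨ N' = vecMulVec (Pi.single 0 1) ψ ∨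
      N + N' = vecMulVec (Pi.single 0 1) ψ := by
  have hNN' : (N + N') *ᵥ Pi.single 0 1 = 0 := by rw [add_mulVec, hN, hN', add_zero]
  rw [det_one_add_of_mulVec_single_zero ‹_›] at h h' hadd
  rcases eq_zero_or_eq_zero_or_add_eq_zero_of_det_one_add h h' hadd with h0 | h0 | h0
  · exact ⟨_, .inl (eq_vecMulVec_single_zero_of_submatrix_eq_zero hN h0)⟩
  · exact ⟨_, .inr (.inl (eq_vecMulVec_single_zero_of_submatrix_eq_zero hN' h0))⟩
  · exact ⟨_, .inr (.inr (eq_vecMulVec_single_zero_of_submatrix_eq_zero hNN' h0))⟩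

lemma exists_eq_vecMulVec_of_mulVec_eq_zero {M N N' : Mat3} {x : Vec3} (hx : x ≠ 0)
    (hN : N *ᵥ x = 0) (hN' : N' *ᵥ x = 0) (hM : M.det = 1) (h : (M + N).det = 1)
    (h' : (M + N').det = 1) (hadd : (M + (N + N')).det = 1) :
    ∃ ψ, N = vecMulVec (M *ᵥ x) ψ ∨ N' = vecMulVec (M *ᵥ x) ψ ∨
      N + N' = vecMulVec (M *ᵥ x) ψ := by
  obtain ⟨Q, rfl⟩ := exists_unit_mulVec_single_zero_eq hx
  obtain ⟨M, rfl⟩ := isUnit_iff_det_eq_one.2 hM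
  set P : Mat3ˣ := (M * Q)⁻¹ with hP
  have hker {K : Mat3} (hK : K *ᵥ (Q.val *ᵥ Pi.single 0 1) = 0) :
      twoSided P Q K *ᵥ Pi.single 0 1 = 0 := by
    rw [twoSided_apply, mul_assoc, ← mulVec_mulVec, ← mulVec_mulVec, hK, mulVec_zero]
  have hdet {K : Mat3} (hK : (M.val + K).det = 1) : (1 + twoSided P Q K).det = 1 := by
    have hfactor : 1 + twoSided P Q K = P * (M + K) * Q := by simp [hP, mul_add, add_mul, mul_assoc]
    rw [hfactor, det_mul, det_mul, hK, isUnit_iff_det_eq_one.1 P.isUnit,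
      isUnit_iff_det_eq_one.1 Q.isUnit, one_mul, one_mul]
  have hback {K : Mat3} {ψ : Vec3} (hK : twoSided P Q K = vecMulVec (Pi.single 0 1) ψ) :
      K = vecMulVec (M.val *ᵥ (Q.val *ᵥ Pi.single 0 1)) (ψ ᵥ* Q⁻¹.val) := by
    rw [mulVec_mulVec, ← vecMulVec_mul, ← mul_vecMulVec, ← hK, twoSided_apply]
    simp [hP, mul_assoc]
  obtain ⟨ψ, hψ⟩ := exists_eq_vecMulVec_of_mulVec_single_zero (hker hN) (hker hN') (hdet h)
    (hdet h') (by rw [← map_add]; exact hdet hadd)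
  rw [← map_add] at hψ
  exact ⟨ψ ᵥ* Q⁻¹.val, hψ.imp hback (Or.imp hback hback)⟩

lemma exists_eq_vecMulVec_of_vecMul_eq_zero {M N N' : Mat3} {y : Vec3} (hy : y ≠ 0)
    (hN : y ᵥ* N = 0) (hN' : y ᵥ* N' = 0) (hM : M.det = 1) (h : (M + N).det = 1)
    (h' : (M + N').det = 1) (hadd : (M + (N + N')).det = 1) :
    ∃ v, N = vecMulVec v (y ᵥ* M) ∨ N' = vecMulVec v (y ᵥ* M) ∨
      N + N' = vecMulVec v (y ᵥ* M) := by
  obtain ⟨v, hv⟩ := exists_eq_vecMulVec_of_mulVec_eq_zero (M := Mᵀ) (N := Nᵀ) (N' := N'ᵀ) hy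
    (by rwa [mulVec_transpose]) (by rwa [mulVec_transpose]) (by rwa [det_transpose])
    (by rwa [← transpose_add, det_transpose]) (by rwa [← transpose_add, det_transpose])
    (by rwa [← transpose_add, ← transpose_add, det_transpose])
  have htranspose {K : Mat3} (hK : Kᵀ = vecMulVec (Mᵀ *ᵥ y) v) : K = vecMulVec v (y ᵥ* M) := by
    rw [← transpose_transpose K, hK, transpose_vecMulVec, mulVec_transpose]
  rw [← transpose_add] at hv
  exact ⟨v, hv.imp htranspose (Or.imp htranspose htranspose)⟩

/-! ### Spaces with a common kernel vector -/

lemma isClassified_of_twoSidedMap_eq {A : Mat3} {H T : Submodule (ZMod 2) Mat3}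
    (hT : T ∈ transList) {P Q : Mat3ˣ} (hA : P * A * Q - 1 ∈ T) (hH : twoSidedMap P Q H = T) :
    IsClassified A H :=
  .of_twoSided P Q (hH ▸ .of_one_sub_mem hT hA)

namespace IsInvertibleCoset

variable {A : Mat3} {H T : Submodule (ZMod 2) Mat3}

lemma finrank_twoSidedMap (h : IsInvertibleCoset A H) (hT : T ∈ transList) (P Q : Mat3ˣ) :
    Module.finrank (ZMod 2) (_root_.twoSidedMap P Q H) = Module.finrank (ZMod 2) T :=
  (LinearEquiv.finrank_map_eq _ H).trans
    (h.finrank_eq.trans (finrank_eq_three_of_mem_transList hT).symm)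

lemma isClassified_of_twoSidedMap_le (h : IsInvertibleCoset A H) (hT : T ∈ transList) {P Q : Mat3ˣ}
    (hA : P * A * Q - 1 ∈ T) (hH : _root_.twoSidedMap P Q H ≤ T) : IsClassified A H :=
  isClassified_of_twoSidedMap_eq hT hA
    (Submodule.eq_of_le_of_finrank_eq hH (h.finrank_twoSidedMap hT P Q))

lemma isClassified_of_le_twoSidedMap (h : IsInvertibleCoset A H) (hT : T ∈ transList) {P Q : Mat3ˣ}
    (hA : P * A * Q - 1 ∈ T) (hH : T ≤ _root_.twoSidedMap P Q H) : IsClassified A H :=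
  isClassified_of_twoSidedMap_eq hT hA
    (Submodule.eq_of_le_of_finrank_eq hH (h.finrank_twoSidedMap hT P Q).symm).symm

end IsInvertibleCoset

lemma exists_mul_eq_mul_of_mulVec_single_zero {N : Mat3} (hN : N *ᵥ Pi.single 0 1 = 0)
    (hdet : (1 + N).det = 1) :
    ∃ y z : Vec3, (of ![Pi.single 0 1, y, z]).det = 1 ∧ ∃ a b c : ZMod 2,
      N * (of ![Pi.single 0 1, y, z])ᵀ =
        (of ![Pi.single 0 1, y, z])ᵀ * !![0, a, b; 0, 0, c; 0, 0, 0] ∨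
      N * (of ![Pi.single 0 1, y, z])ᵀ =
        (of ![Pi.single 0 1, y, z])ᵀ * !![0, a, b; 0, 0, c; 0, c, c] := by
  simp only [det_fin_three] at hdet ⊢
  revert N
  decide +kernel

lemma vecMulVec_single_zero_mem_nt3 {ψ : Vec3} (hψ : ψ 0 = 0) :
    vecMulVec (Pi.single 0 1) ψ ∈ NT3 := by
  refine mem_nt3_iff.2 ⟨ψ 1, ψ 2, 0, ?_⟩
  revert ψ
  decide

lemma vecMulVec_single_zero_mem_spaceW3 {ψ : Vec3} (hψ : ψ 0 = 0) :
    vecMulVec (Pi.single 0 1) ψ ∈ SpaceW3 := by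
  refine ⟨0, ψ 1, ψ 2, ?_⟩
  revert ψ
  decide

lemma twoSidedMap_inv_le {H T : Submodule (ZMod 2) Mat3} {Q : Mat3ˣ} {N N' : Mat3}
    (hQ : Q.val *ᵥ Pi.single 0 1 = Pi.single 0 1)
    (hH : ∀ M ∈ H, M *ᵥ Pi.single 0 1 = 0) (hN : N ∈ H)
    (hNH : ∀ M ∈ H, ∃ ψ, M = vecMulVec (Pi.single 0 1) ψ ∨
      M = N + vecMulVec (Pi.single 0 1) ψ)
    (hNQ : N * Q = Q * N') (hN' : N' ∈ T)
    (hT : ∀ ψ : Vec3, ψ 0 = 0 → vecMulVec (Pi.single 0 1) ψ ∈ T) :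
    twoSidedMap Q⁻¹ Q H ≤ T := by
  have hrow {ψ : Vec3} (hψ : vecMulVec (Pi.single 0 1) ψ ∈ H) :
      twoSided Q⁻¹ Q (vecMulVec (Pi.single 0 1) ψ) ∈ T := by
    have hinv : Q⁻¹.val *ᵥ Pi.single 0 1 = Pi.single 0 1 := by
      nth_rw 1 [← hQ]
      rw [mulVec_mulVec, Units.inv_mul, one_mulVec]
    have hψ0 : ψ ⬝ᵥ Pi.single 0 1 = 0 := by
      simpa [vecMulVec_apply] using congrFun (hH _ hψ) 0
    rw [twoSided_apply, mul_vecMulVec, hinv, vecMulVec_mul]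
    refine hT _ ?_
    rw [← dotProduct_single_one (ψ ᵥ* Q.val), ← dotProduct_mulVec, hQ, hψ0]
  rintro _ ⟨M, hM, rfl⟩
  obtain ⟨ψ, rfl | rfl⟩ := hNH M hM
  · exact hrow hM
  · have hNmem : twoSided Q⁻¹ Q N ∈ T := by
      rwa [twoSided_apply, mul_assoc, hNQ, ← mul_assoc, Units.inv_mul, one_mul]
    exact (map_add (twoSided Q⁻¹ Q) _ _).symm ▸
      T.add_mem hNmem (hrow ((H.add_mem_iff_right hN).1 hM))

namespace IsInvertibleCoset

variable {A : Mat3} {H : Submodule (ZMod 2) Mat3}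

lemma exists_forall_eq_vecMulVec_or (h : IsInvertibleCoset 1 H)
    (hH : ∀ M ∈ H, M *ᵥ Pi.single 0 1 = 0) :
    ∃ N ∈ H, ∀ M ∈ H, ∃ ψ, M = vecMulVec (Pi.single 0 1) ψ ∨
      M = N + vecMulVec (Pi.single 0 1) ψ := by
  by_cases hrow : ∀ M ∈ H, ∃ ψ, M = vecMulVec (Pi.single 0 1) ψ
  · exact ⟨0, H.zero_mem, fun M hM => (hrow M hM).imp fun ψ hψ => .inl hψ⟩
  push Not at hrow
  obtain ⟨N, hN, hNrow⟩ := hrow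
  refine ⟨N, hN, fun M hM => ?_⟩
  obtain ⟨ψ, hψ | hψ | hψ⟩ := exists_eq_vecMulVec_of_mulVec_single_zero (hH N hN) (hH M hM)
    (h.det_add N hN) (h.det_add M hM) (h.det_add _ (H.add_mem hN hM))
  · exact absurd hψ (hNrow ψ)
  · exact ⟨ψ, .inl hψ⟩
  · exact ⟨ψ, .inr (by rw [← hψ, ← add_assoc, CharTwo.add_self_eq_zero, zero_add])⟩

lemma isClassified_of_mulVec_single_zero (h : IsInvertibleCoset 1 H)
    (hH : ∀ M ∈ H, M *ᵥ Pi.single 0 1 = 0) : IsClassified 1 H := by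
  obtain ⟨N, hN, hNH⟩ := h.exists_forall_eq_vecMulVec_or hH
  obtain ⟨y, z, hdet, a, b, c, hconj⟩ :=
    exists_mul_eq_mul_of_mulVec_single_zero (hH N hN) (h.det_add N hN)
  obtain ⟨Q, hQ⟩ := isUnit_iff_det_eq_one.2 ((det_transpose _).trans hdet)
  rw [← hQ] at hconj
  have hQ0 : Q.val *ᵥ Pi.single 0 1 = Pi.single 0 1 := by
    rw [hQ, mulVec_single_one]
    rfl
  have hone (T : Submodule (ZMod 2) Mat3) : Q⁻¹.val * 1 * Q - 1 ∈ T := by simp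
  rcases hconj with hconj | hconj
  · refine h.isClassified_of_twoSidedMap_le (T := NT3) (by simp [transList]) (hone _)
      (twoSidedMap_inv_le hQ0 hH hN hNH hconj ?_ fun ψ => vecMulVec_single_zero_mem_nt3)
    exact mem_nt3_iff.2 ⟨a, b, c, rfl⟩
  · exact h.isClassified_of_twoSidedMap_le (T := SpaceW3) (by simp [transList]) (hone _)
      (twoSidedMap_inv_le hQ0 hH hN hNH hconj ⟨c, a, b, rfl⟩
        fun ψ => vecMulVec_single_zero_mem_spaceW3)

lemma isClassified_of_hasRightKernel (h : IsInvertibleCoset A H) (hH : HasRightKernel H) :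
    IsClassified A H := by
  obtain ⟨x, hx, hHx⟩ := hH
  obtain ⟨Q, rfl⟩ := exists_unit_mulVec_single_zero_eq hx
  obtain ⟨A, rfl⟩ := h.isUnit
  have hone : (Q⁻¹ * A⁻¹).val * A * Q = 1 := by simp [mul_assoc]
  refine .of_twoSided (Q⁻¹ * A⁻¹) Q ?_
  have h1 := h.twoSidedMap (Q⁻¹ * A⁻¹) Q
  rw [hone] at h1 ⊢
  refine h1.isClassified_of_mulVec_single_zero ?_
  rintro _ ⟨M, hM, rfl⟩
  rw [LinearEquiv.coe_coe, twoSided_apply, mul_assoc, ← mulVec_mulVec, ← mulVec_mulVec, hHx M hM,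
    mulVec_zero]

end IsInvertibleCoset

/-! ### Transposition -/

lemma transposeSpace_transposeSpace {n R : Type*} [CommRing R]
    (H : Submodule R (Matrix n n R)) :
    transposeSpace (transposeSpace H) = H := by
  ext M
  rw [mem_transposeSpace, mem_transposeSpace, transpose_transpose]

lemma isInvertibleCoset_model (t : Fin 5) : IsInvertibleCoset 1 (model t) where
  finrank_eq := finrank_model t
  det_add _ hM := det_one_add_eq_one_of_mem_model hM

lemma model_mem_transList (t : Fin 5) : model t ∈ transList := by
  rw [transList_eq_ofFn_model, List.mem_ofFn]
  exact ⟨t, rfl⟩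

-- Transposition preserves every model up to a permutation of coordinates, except that it swaps
-- `SpaceW2` and `SpaceW3`.
lemma exists_conj_transpose_modelBasis_mem (t : Fin 5) :
    ∃ P : Mat3, P * Pᵀ = 1 ∧ ∃ s, ∀ i, P * (modelBasis t i)ᵀ * Pᵀ ∈ model s := by
  let reversal : Mat3 := !![0, 0, 1; 0, 1, 0; 1, 0, 0]
  let cycle : Mat3 := !![0, 0, 1; 1, 0, 0; 0, 1, 0]
  refine ⟨![reversal, cycle, cycleᵀ, reversal, reversal] t, ?_, ![0, 2, 1, 3, 4] t, fun i => ?_⟩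
  · revert t
    decide +kernel
  · rw [mem_model]
    revert t i
    decide +kernel

lemma isClassified_transposeSpace_model (t : Fin 5) :
    IsClassified 1 (transposeSpace (model t)) := by
  obtain ⟨P, hP, s, hs⟩ := exists_conj_transpose_modelBasis_mem t
  let U : Mat3ˣ := ⟨P, Pᵀ, hP, mul_eq_one_comm.1 hP⟩
  have h := transpose_one (α := ZMod 2) (n := Fin 3) ▸ (isInvertibleCoset_model t).transpose
  refine h.isClassified_of_twoSidedMap_le (P := U) (Q := U⁻¹) (model_mem_transList s) ?_ ?_
  · rw [mul_one, Units.mul_inv, sub_self]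
    exact zero_mem _
  · rw [model, transposeSpace, twoSidedMap, Submodule.map_span, Submodule.map_span,
      Submodule.span_le]
    rintro _ ⟨_, ⟨_, ⟨i, rfl⟩, rfl⟩, rfl⟩
    exact twoSided_apply U U⁻¹ _ ▸ hs i

lemma IsClassified.of_transpose {A : Mat3} {H : Submodule (ZMod 2) Mat3}
    (h : IsClassified Aᵀ (transposeSpace H)) : IsClassified A H := by
  obtain ⟨_, hT, hAT⟩ := h
  rw [transList_eq_ofFn_model, List.mem_ofFn] at hT
  obtain ⟨t, rfl⟩ := hT
  obtain ⟨T, hT, htT⟩ := isClassified_transposeSpace_model t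
  refine ⟨T, hT, .trans ?_ htT⟩
  simpa only [← affineCoset_one, transpose_image_affineCoset, transpose_transpose, transpose_one,
    transposeSpace_transposeSpace] using hAT.transpose

lemma IsInvertibleCoset.isClassified_of_hasLeftKernel {A : Mat3} {H : Submodule (ZMod 2) Mat3}
    (h : IsInvertibleCoset A H) (hH : HasLeftKernel H) : IsClassified A H :=
  .of_transpose (h.transpose.isClassified_of_hasRightKernel (hasRightKernel_transposeSpace.2 hH))

/-! ### Spaces containing a matrix of rank one -/

lemma eq_of_vecMulVec_eq {n : Type*} {u v φ ψ : n → ZMod 2} (hu : u ≠ 0) (hφ : φ ≠ 0)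
    (h : vecMulVec u φ = vecMulVec v ψ) : φ = ψ := by
  obtain ⟨i, hi⟩ := Function.ne_iff.1 hu
  have hrow : u i • φ = v i • ψ := funext fun j => congrFun₂ h i j
  have hui : u i = 1 := zmod_two_eq_one hi
  have hvi : v i = 1 := zmod_two_eq_one fun h0 => hφ (by simpa [hui, h0] using hrow)
  simpa [hui, hvi] using hrow

namespace IsInvertibleCoset

variable {A : Mat3} {H : Submodule (ZMod 2) Mat3} {u v φ ψ : Vec3}

lemma hasRightKernel_of_forall_mulVec_eq {x c : Vec3} (hx : x ≠ 0)
    (hA : ∀ N ∈ H, (A + N) *ᵥ x = c) : HasRightKernel H := by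
  refine ⟨x, hx, fun N hN => ?_⟩
  have h0 : A *ᵥ x = c := by simpa using hA 0 H.zero_mem
  simpa [add_mulVec, h0] using hA N hN

lemma hasLeftKernel_of_forall_vecMul_eq {y c : Vec3} (hy : y ≠ 0)
    (hA : ∀ N ∈ H, y ᵥ* (A + N) = c) : HasLeftKernel H := by
  refine ⟨y, hy, fun N hN => ?_⟩
  have h0 : y ᵥ* A = c := by simpa using hA 0 H.zero_mem
  simpa [vecMul_add, h0] using hA N hN

lemma mulVec_ne_zero (h : IsInvertibleCoset A H) {N : Mat3} (hN : N ∈ H) {x : Vec3} (hx : x ≠ 0) :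
    (A + N) *ᵥ x ≠ 0 := by
  intro h0
  have hdet : (A + N).det = 0 := exists_mulVec_eq_zero_iff.1 ⟨x, hx, h0⟩
  exact one_ne_zero ((h.det_add N hN).symm.trans hdet)

lemma card_eq_eight (h : IsInvertibleCoset A H) : Nat.card H = 8 := by
  rw [Module.natCard_eq_pow_finrank (K := ZMod 2), h.finrank_eq, Nat.card_zmod]
  rfl

-- If `φ x = 1`, then `x` would lie in the kernel of the invertible matrix `A + N + u φ`.
lemma exists_mulVec_eq (h : IsInvertibleCoset A H) (hu : u ≠ 0) (huφ : vecMulVec u φ ∈ H) {N : Mat3}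
    (hN : N ∈ H) : ∃ x, (A + N) *ᵥ x = u ∧ x ≠ 0 ∧ φ ⬝ᵥ x = 0 := by
  obtain ⟨B, hB⟩ := (h.add_mem hN).isUnit
  have hx : (A + N) *ᵥ (B⁻¹.val *ᵥ u) = u := by
    rw [← hB, mulVec_mulVec, Units.mul_inv, one_mulVec]
  have hx0 : B⁻¹.val *ᵥ u ≠ 0 := fun h0 => hu (by rw [← hx, h0, mulVec_zero])
  refine ⟨_, hx, hx0, ?_⟩
  by_contra hφx
  refine h.mulVec_ne_zero (H.add_mem hN huφ) hx0 ?_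
  rw [← add_assoc, add_mulVec, hx, vecMulVec_mulVec, zmod_two_eq_one hφx, MulOpposite.op_one,
    one_smul, CharTwo.add_self_eq_zero]

lemma exists_mulVec_eq_zero_of_vecMulVec_mem (h : IsInvertibleCoset A H) (hu : u ≠ 0) (hφ : φ ≠ 0)
    (huφ : vecMulVec u φ ∈ H) :
    ∃ x, x ≠ 0 ∧ φ ⬝ᵥ x = 0 ∧ ∃ N ∈ H, N *ᵥ x = 0 ∧ N ≠ 0 ∧ N ≠ vecMulVec u φ := by
  choose x hx hx0 hφx using fun N : H => h.exists_mulVec_eq hu huφ N.2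
  have hcard : ∀ φ : Vec3, φ ≠ 0 → (Finset.univ.filter fun x => x ≠ 0 ∧ φ ⬝ᵥ x = 0).card = 3 := by
    decide +kernel
  have := Fintype.ofFinite H
  obtain ⟨x₀, hx₀, hfiber⟩ := Finset.exists_lt_card_fiber_of_mul_lt_card_of_maps_to
    (s := Finset.univ) (t := Finset.univ.filter fun x => x ≠ 0 ∧ φ ⬝ᵥ x = 0) (f := x) (n := 2)
    (fun N _ => by simpa using ⟨hx0 N, hφx N⟩)
    (by rw [hcard φ hφ, Finset.card_univ, ← Nat.card_eq_fintype_card, h.card_eq_eight]; decide)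
  obtain ⟨hx₀, hφx₀⟩ : x₀ ≠ 0 ∧ φ ⬝ᵥ x₀ = 0 := by simpa using hx₀
  obtain ⟨N₁, N₂, N₃, h₁, h₂, h₃, h₁₂, h₁₃, h₂₃⟩ := Finset.two_lt_card_iff.1 hfiber
  simp only [Finset.mem_filter, Finset.mem_univ, true_and] at h₁ h₂ h₃
  have hker {N N' : H} (hN : x N = x₀) (hN' : x N' = x₀) : (N - N' : Mat3) *ᵥ x₀ = 0 := by
    rw [← add_sub_add_left_eq_sub N.val N'.val A, sub_mulVec, sub_eq_zero]
    calc
      (A + N.val) *ᵥ x₀ = u := hN ▸ hx N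
      _ = (A + N'.val) *ᵥ x₀ := (hN' ▸ hx N').symm
  have hsub {N N' : H} (hNN' : N ≠ N') : (N - N' : Mat3) ≠ 0 :=
    sub_ne_zero.2 fun h0 => hNN' (Subtype.ext h0)
  refine ⟨x₀, hx₀, hφx₀, ?_⟩
  by_cases hN : (N₁ - N₂ : Mat3) = vecMulVec u φ
  · refine ⟨_, sub_mem N₁.2 N₃.2, hker h₁ h₃, hsub h₁₃, fun h0 => h₂₃ ?_⟩
    exact Subtype.ext (sub_right_injective (hN.trans h0.symm))
  · exact ⟨_, sub_mem N₁.2 N₂.2, hker h₁ h₂, hsub h₁₂, hN⟩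

lemma exists_second_vecMulVec_mem (h : IsInvertibleCoset A H) (hright : ¬ HasRightKernel H)
    (hu : u ≠ 0) (hφ : φ ≠ 0) (huφ : vecMulVec u φ ∈ H) :
    ∃ v ψ, v ≠ 0 ∧ v ≠ u ∧ ψ ≠ 0 ∧ vecMulVec v ψ ∈ H := by
  obtain ⟨x, hx, hφx, N, hN, hNx, hN0, hNu⟩ := h.exists_mulVec_eq_zero_of_vecMulVec_mem hu hφ huφ
  obtain ⟨K, hK, hKx⟩ : ∃ K ∈ H, (A + K) *ᵥ x ≠ u := by
    by_contra! hall
    exact hright (hasRightKernel_of_forall_mulVec_eq hx hall)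
  have hAK := h.add_mem hK
  have huφx : vecMulVec u φ *ᵥ x = 0 := by
    rw [vecMulVec_mulVec, hφx, MulOpposite.op_zero, zero_smul]
  obtain ⟨ψ, hψ⟩ := exists_eq_vecMulVec_of_mulVec_eq_zero hx huφx hNx hAK.det_eq_one
    (hAK.det_add _ huφ) (hAK.det_add _ hN) (hAK.det_add _ (H.add_mem huφ hN))
  have hmem : vecMulVec ((A + K) *ᵥ x) ψ ∈ H ∧ vecMulVec ((A + K) *ᵥ x) ψ ≠ 0 := by
    rcases hψ with hψ | hψ | hψ <;> rw [← hψ]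
    · exact ⟨huφ, vecMulVec_ne_zero hu hφ⟩
    · exact ⟨hN, hN0⟩
    · exact ⟨H.add_mem huφ hN, fun h0 => hNu (CharTwo.add_eq_zero.1 h0).symm⟩
  refine ⟨_, ψ, h.mulVec_ne_zero hK hx, hKx, ?_, hmem.1⟩
  rintro rfl
  exact hmem.2 (vecMulVec_zero _)

lemma hasLeftKernel_of_vecMulVec_mem (h : IsInvertibleCoset A H) (hu : u ≠ 0) (hv : v ≠ 0)
    (huv : v ≠ u) (hφ : φ ≠ 0) (huφ : vecMulVec u φ ∈ H) (hvφ : vecMulVec v φ ∈ H) :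
    HasLeftKernel H := by
  have horth : ∀ u v : Vec3, ∃ y, y ≠ 0 ∧ y ⬝ᵥ u = 0 ∧ y ⬝ᵥ v = 0 := by decide +kernel
  obtain ⟨y, hy, hyu, hyv⟩ := horth u v
  have hker {w : Vec3} (hw : y ⬝ᵥ w = 0) : y ᵥ* vecMulVec w φ = 0 := by
    rw [vecMul_vecMulVec, hw, zero_smul]
  refine hasLeftKernel_of_forall_vecMul_eq (A := A) (c := φ) hy fun N hN => ?_
  have hAN := h.add_mem hN
  obtain ⟨w, hw⟩ := exists_eq_vecMulVec_of_vecMul_eq_zero hy (hker hyu) (hker hyv) hAN.det_eq_one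
    (hAN.det_add _ huφ) (hAN.det_add _ hvφ) (hAN.det_add _ (H.add_mem huφ hvφ))
  rw [← add_vecMulVec] at hw
  rcases hw with hw | hw | hw
  · exact (eq_of_vecMulVec_eq hu hφ hw).symm
  · exact (eq_of_vecMulVec_eq hv hφ hw).symm
  · exact (eq_of_vecMulVec_eq (fun h0 => huv (CharTwo.add_eq_zero.1 h0).symm) hφ hw).symm

lemma exists_pair_vecMulVec_mem (h : IsInvertibleCoset A H) (hright : ¬ HasRightKernel H)
    (hleft : ¬ HasLeftKernel H) (hrank : HasRankOne H) :
    ∃ u v φ ψ, u ≠ 0 ∧ v ≠ 0 ∧ v ≠ u ∧ φ ≠ 0 ∧ ψ ≠ 0 ∧ ψ ≠ φ ∧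
      vecMulVec u φ ∈ H ∧ vecMulVec v ψ ∈ H := by
  obtain ⟨u, φ, hu, hφ, huφ⟩ := hrank
  obtain ⟨v, ψ, hv, huv, hψ, hvψ⟩ := h.exists_second_vecMulVec_mem hright hu hφ huφ
  refine ⟨u, v, φ, ψ, hu, hv, huv, hφ, hψ, ?_, huφ, hvψ⟩
  rintro rfl
  exact hleft (h.hasLeftKernel_of_vecMulVec_mem hu hv huv hφ huφ hvψ)

end IsInvertibleCoset

lemma exists_unit_mulVec_single_eq_pair {u v : Vec3} (hu : u ≠ 0) (hv : v ≠ 0) (huv : v ≠ u) :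
    ∃ P : Mat3ˣ, P.val *ᵥ u = Pi.single 0 1 ∧ P.val *ᵥ v = Pi.single 1 1 := by
  have hbasis : ∀ u v : Vec3, u ≠ 0 → v ≠ 0 → v ≠ u → ∃ w : Vec3, (of ![u, v, w]).det = 1 := by
    simp only [det_fin_three]
    decide +kernel
  obtain ⟨w, hw⟩ := hbasis u v hu hv huv
  obtain ⟨P, hP⟩ := exists_unit_mulVec_single_eq (hw ▸ isUnit_one)
  have hPinv (i : Fin 3) : P⁻¹.val *ᵥ ![u, v, w] i = Pi.single i 1 := by
    rw [← hP, mulVec_mulVec, Units.inv_mul, one_mulVec]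
  exact ⟨P⁻¹, hPinv 0, hPinv 1⟩

lemma exists_units_vecMulVec_single_mem {H : Submodule (ZMod 2) Mat3} {u v φ ψ : Vec3}
    (hu : u ≠ 0) (hv : v ≠ 0) (huv : v ≠ u) (hφ : φ ≠ 0) (hψ : ψ ≠ 0) (hφψ : ψ ≠ φ)
    (huφ : vecMulVec u φ ∈ H) (hvψ : vecMulVec v ψ ∈ H) :
    ∃ P Q : Mat3ˣ, single 0 0 1 ∈ twoSidedMap P Q H ∧ single 1 1 1 ∈ twoSidedMap P Q H := by
  obtain ⟨P, hPu, hPv⟩ := exists_unit_mulVec_single_eq_pair hu hv huv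
  obtain ⟨R, hRφ, hRψ⟩ := exists_unit_mulVec_single_eq_pair hφ hψ hφψ
  obtain ⟨Q, hQ⟩ := (isUnit_transpose R.val).2 R.isUnit
  refine ⟨P, Q, ?_, ?_⟩
  · have hmem := mul_mul_mem_twoSidedMap (P := P) (Q := Q) huφ
    rwa [mul_vecMulVec, vecMulVec_mul, hQ, vecMul_transpose, hPu, hRφ,
      ← single_eq_single_vecMulVec_single] at hmem
  · have hmem := mul_mul_mem_twoSidedMap (P := P) (Q := Q) hvψ
    rwa [mul_vecMulVec, vecMulVec_mul, hQ, vecMul_transpose, hPv, hRψ,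
      ← single_eq_single_vecMulVec_single] at hmem

lemma eq_or_eq_of_det_add_smul_single {M : Mat3}
    (hM : ∀ b c : ZMod 2, (M + (b • single 0 0 1 + c • single 1 1 1)).det = 1) :
    (∃ a b s, M = !![a, 1, 0; s, b, 1; 1, 0, 0]) ∨ ∃ a b s, M = !![a, s, 1; 1, b, 0; 0, 1, 0] := by
  simp only [det_fin_three] at hM
  revert M
  decide +kernel

namespace IsInvertibleCoset

variable {A : Mat3} {H : Submodule (ZMod 2) Mat3}

lemma exists_add_eq_of_single_mem (h : IsInvertibleCoset A H) (hright : ¬ HasRightKernel H)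
    (hleft : ¬ HasLeftKernel H) (h₀ : single 0 0 1 ∈ H) (h₁ : single 1 1 1 ∈ H) :
    (∃ N ∈ H, ∃ a b s, A + N = !![a, 1, 0; s, b, 1; 1, 0, 0]) ∧
      ∃ N ∈ H, ∃ a b s, A + N = !![a, s, 1; 1, b, 0; 0, 1, 0] := by
  have hshape {N : Mat3} (hN : N ∈ H) := eq_or_eq_of_det_add_smul_single fun b c =>
    (h.add_mem hN).det_add _ (H.add_mem (H.smul_mem b h₀) (H.smul_mem c h₁))
  constructor
  · by_contra! hnot
    refine hright (hasRightKernel_of_forall_mulVec_eq (A := A) (x := Pi.single 2 1)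
      (c := Pi.single 0 1) (by simp) fun N hN => ?_)
    obtain ⟨a, b, s, hA⟩ := (hshape hN).resolve_left fun ⟨a, b, s, hA⟩ => hnot N hN a b s hA
    have hcol : ∀ a b s : ZMod 2, !![a, s, 1; 1, b, 0; 0, 1, 0].col 2 = Pi.single 0 1 := by decide
    rw [hA, mulVec_single_one]
    exact hcol a b s
  · by_contra! hnot
    refine hleft (hasLeftKernel_of_forall_vecMul_eq (A := A) (y := Pi.single 2 1)
      (c := Pi.single 0 1) (by simp) fun N hN => ?_)
    obtain ⟨a, b, s, hA⟩ := (hshape hN).resolve_right fun ⟨a, b, s, hA⟩ => hnot N hN a b s hA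
    have hrow : ∀ a b s : ZMod 2, !![a, 1, 0; s, b, 1; 1, 0, 0].row 2 = Pi.single 0 1 := by decide
    rw [hA, single_one_vecMul]
    exact hrow a b s

lemma isClassified_of_single_mem (h : IsInvertibleCoset A H) (hright : ¬ HasRightKernel H)
    (hleft : ¬ HasLeftKernel H) (h₀ : single 0 0 1 ∈ H) (h₁ : single 1 1 1 ∈ H) :
    IsClassified A H := by
  obtain ⟨⟨N, hN, a, b, s, hAN⟩, K, hK, a', b', s', hAK⟩ :=
    h.exists_add_eq_of_single_mem hright hleft h₀ h₁
  obtain ⟨P, hP⟩ : IsUnit !![1, 0, s'; 0, 1, s; 0, 0, 1] :=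
    isUnit_iff_det_eq_one.2 (by simp [det_fin_three])
  obtain ⟨Q, hQ⟩ : IsUnit (!![0, 1, 0; 0, 0, 1; 1, 0, 0] : Mat3) :=
    isUnit_iff_det_eq_one.2 (by simp [det_fin_three])
  have hNK : N + K = !![a, 1, 0; s, b, 1; 1, 0, 0] + !![a', s', 1; 1, b', 0; 0, 1, 0] := by
    rw [← hAN, ← hAK, ← CharTwo.sub_eq_add, ← CharTwo.sub_eq_add, add_sub_add_left_eq_sub]
  refine .of_sub_mem (B := A + K) (by simpa using hK) ?_
  refine (h.add_mem hK).isClassified_of_le_twoSidedMap (T := SpaceT2) (P := P) (Q := Q)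
    (by simp [transList]) ⟨0, a', b' + s, ?_⟩ ?_
  · rw [hAK, hP, hQ]
    clear * -
    decide +revert
  · rintro _ ⟨α, β, γ, rfl⟩
    refine ⟨α • (N + K) + (β + α * (a + s' + a')) • single 0 0 1 +
      (γ + α * (b + b' + s)) • single 1 1 1, ?_, ?_⟩
    · exact H.add_mem (H.add_mem (H.smul_mem _ (H.add_mem hN hK)) (H.smul_mem _ h₀))
        (H.smul_mem _ h₁)
    · rw [LinearEquiv.coe_coe, twoSided_apply, hNK, hP, hQ]
      clear * -
      decide +revert +kernel

lemma isClassified_of_hasRankOne (h : IsInvertibleCoset A H) (hright : ¬ HasRightKernel H)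
    (hleft : ¬ HasLeftKernel H) (hrank : HasRankOne H) : IsClassified A H := by
  obtain ⟨u, v, φ, ψ, hu, hv, huv, hφ, hψ, hφψ, huφ, hvψ⟩ :=
    h.exists_pair_vecMulVec_mem hright hleft hrank
  obtain ⟨P, Q, h₀, h₁⟩ := exists_units_vecMulVec_single_mem hu hv huv hφ hψ hφψ huφ hvψ
  refine .of_twoSided P Q ((h.twoSidedMap P Q).isClassified_of_single_mem ?_ ?_ h₀ h₁)
  · rwa [hasRightKernel_twoSidedMap]
  · rwa [hasLeftKernel_twoSidedMap]

end IsInvertibleCoset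

/-! ### Spaces without common kernels and without matrices of rank one -/

lemma exists_eq_vecMulVec_of_mulVec_pair_eq_zero {N : Mat3} {x y : Vec3} (hx : x ≠ 0) (hy : y ≠ 0)
    (hxy : y ≠ x) (hNx : N *ᵥ x = 0) (hNy : N *ᵥ y = 0) : ∃ u φ, N = vecMulVec u φ := by
  obtain ⟨P, hPx, hPy⟩ := exists_unit_mulVec_single_eq_pair hx hy hxy
  have hP {v w : Vec3} (hv : N *ᵥ v = 0) (hw : P.val *ᵥ v = w) : (N * P⁻¹.val) *ᵥ w = 0 := by
    rw [← hw, mulVec_mulVec, Units.inv_mul_cancel_right, hv]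
  have hcol : N * P⁻¹.val = vecMulVec ((N * P⁻¹.val).col 2) (Pi.single 2 1 : Vec3) := by
    ext i j
    fin_cases j
    · simpa [vecMulVec_apply] using congrFun (hP hNx hPx) i
    · simpa [vecMulVec_apply] using congrFun (hP hNy hPy) i
    · simp [vecMulVec_apply]
  exact ⟨_, Pi.single 2 1 ᵥ* P.val, by rw [← vecMulVec_mul, ← hcol, Units.inv_mul_cancel_right]⟩

/-- The matrix of the cross product with `x`; signs play no role over `F2`. -/
def crossMatrix (x : Vec3) : Mat3 := !![0, x 2, x 1; x 2, 0, x 0; x 1, x 0, 0]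

lemma exists_det_add_crossMatrix_ne_one (M : Mat3) : ∃ x, (M + crossMatrix x).det ≠ 1 := by
  simp only [det_fin_three]
  revert M
  decide +kernel

lemma exists_eq_mul_crossMatrix {f : Vec3 → Mat3} (hadd : ∀ x y, f (x + y) = f x + f y)
    (hself : ∀ x, f x *ᵥ x = 0) : ∃ G, ∀ x, f x = G * crossMatrix x := by
  have hsymm (x y : Vec3) : f x *ᵥ y = f y *ᵥ x := by
    have h := hself (x + y)
    rw [hadd, add_mulVec, mulVec_add, mulVec_add, hself, hself, zero_add, add_zero] at h
    exact CharTwo.add_eq_zero.1 h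
  set e : Fin 3 → Vec3 := fun i => Pi.single i 1
  refine ⟨(of ![f (e 1) *ᵥ e 2, f (e 2) *ᵥ e 0, f (e 0) *ᵥ e 1])ᵀ, fun x => ?_⟩
  have hcol (j : Fin 3) : (f x).col j = ∑ i, x i • (f (e j) *ᵥ e i) := by
    rw [← mulVec_single_one, hsymm, mulVec_eq_sum]
    simp only [e, mulVec_single_one, op_smul_eq_smul]
    rfl
  clear_value e
  ext i j
  refine (congrFun (hcol j) i).trans ?_
  fin_cases j <;>
    simp [Fin.sum_univ_three, Matrix.mul_apply, crossMatrix, hself, mul_comm, hsymm (e 1) (e 0),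
      hsymm (e 2) (e 1), hsymm (e 2) (e 0), add_comm]

-- Modulo the two diagonal matrices, `M` is the permutation matrix of a 3-cycle.
lemma mul_sub_one_mem_spaceT1 {M : Mat3}
    (hM : ∀ b c : ZMod 2, (M + (b • diagonal ![0, 1, 1] + c • diagonal ![1, 0, 1])).det = 1) :
    M * !![0, 1, 0; 0, 0, 1; 1, 0, 0] - 1 ∈ SpaceT1 := by
  change ∃ a b c : ZMod 2, _ = !![a, b, a; a, a, c; b + c, a, a]
  simp only [det_fin_three] at hM
  revert M
  decide +kernel

lemma ne_zero_of_map_add_ne {V W : Type*} [AddCommGroup V] [Module (ZMod 2) V] [AddCommGroup W]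
    [Module (ZMod 2) W] {κ : V → W} {x y : V} (hκ0 : κ 0 = 0) (hxy : κ (x + y) ≠ κ x + κ y) :
    x ≠ 0 ∧ y ≠ 0 ∧ y ≠ x := by
  refine ⟨?_, ?_, ?_⟩ <;> rintro rfl <;> refine hxy ?_
  · rw [hκ0, zero_add, zero_add]
  · rw [hκ0, add_zero, add_zero]
  · rw [ZModModule.add_self, ZModModule.add_self, hκ0]

lemma det_eq_one_of_map_eq_add {W : Type*} [AddCommGroup W] [Module (ZMod 2) W] {κ : Vec3 ≃ W}
    {x y z : Vec3} (hκ0 : κ 0 = 0) (hxy : κ (x + y) ≠ κ x + κ y) (hz : κ z = κ x + κ y) :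
    (of ![x, y, z]).det = 1 := by
  obtain ⟨hx, hy, hyx⟩ := ne_zero_of_map_add_ne hκ0 hxy
  have hz0 : z ≠ 0 := by
    rintro rfl
    refine hyx (κ.injective ?_)
    rw [hκ0, ← ZModModule.add_self (κ y)] at hz
    exact add_right_cancel hz
  have hzx : z ≠ x := by
    rintro rfl
    exact hy (κ.injective ((left_eq_add.1 hz).trans hκ0.symm))
  have hzy : z ≠ y := by
    rintro rfl
    exact hx (κ.injective ((right_eq_add.1 hz).trans hκ0.symm))
  have hzxy : z ≠ x + y := fun h0 => hxy (h0 ▸ hz)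
  have hbasis : ∀ x y z : Vec3, x ≠ 0 ∧ y ≠ 0 ∧ y ≠ x ∧ z ≠ 0 ∧ z ≠ x ∧ z ≠ y ∧ z ≠ x + y →
      (of ![x, y, z]).det = 1 := by
    simp only [det_fin_three]
    decide +kernel
  exact hbasis x y z ⟨hx, hy, hyx, hz0, hzx, hzy, hzxy⟩

lemma eq_zero_of_dotProduct_mulVec_eq_zero {n R : Type*} [CommRing R] [Fintype n]
    [DecidableEq n] {N : Matrix n n R} {b : n → n → R} (hb : IsUnit (of b).det) {w : n → R}
    (hw : ∀ i, w ⬝ᵥ N *ᵥ b i = 0) : w ᵥ* N = 0 := by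
  obtain ⟨Q, hQ⟩ := exists_unit_mulVec_single_eq hb
  have hwQ : w ᵥ* N ᵥ* Q.val = 0 := by
    ext i
    rw [vecMul_vecMul, ← dotProduct_single_one (w ᵥ* _), ← dotProduct_mulVec, ← mulVec_mulVec, hQ]
    exact hw i
  simpa using congrArg (· ᵥ* Q⁻¹.val) hwQ

namespace IsInvertibleCoset

variable {A : Mat3} {H : Submodule (ZMod 2) Mat3} {N N' : Mat3} {x y z : Vec3}

lemma exists_mulVec_eq_zero (h : IsInvertibleCoset A H) (hx : x ≠ 0) :
    ∃ N ∈ H, N ≠ 0 ∧ N *ᵥ x = 0 := by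
  set ev : H →ₗ[ZMod 2] Vec3 := (mulVecBilin (ZMod 2) (ZMod 2)).flip x ∘ₗ H.subtype
  have hfinrank : Module.finrank (ZMod 2) H = Module.finrank (ZMod 2) Vec3 := by
    rw [h.finrank_eq, Module.finrank_fin_fun]
  -- The value `A x` is not taken, as otherwise some `A + N` would kill `x`.
  have hsurj : ¬ Function.Surjective ev := fun hsurj => by
    obtain ⟨N, hN⟩ := hsurj (A *ᵥ x)
    have hNx : N.val *ᵥ x = A *ᵥ x := hN
    exact h.mulVec_ne_zero N.2 hx (by rw [add_mulVec, hNx, CharTwo.add_self_eq_zero])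
  rw [← LinearMap.injective_iff_surjective_of_finrank_eq_finrank hfinrank,
    injective_iff_map_eq_zero] at hsurj
  push Not at hsurj
  obtain ⟨N, hN, hN0⟩ := hsurj
  exact ⟨N, N.2, fun h0 => hN0 (Subtype.ext h0), hN⟩

lemma eq_of_mulVec_eq_zero (h : IsInvertibleCoset A H) (hrank : ¬ HasRankOne H) (hN : N ∈ H)
    (hN' : N' ∈ H) (hN0 : N ≠ 0) (hN0' : N' ≠ 0) (hx : x ≠ 0) (hNx : N *ᵥ x = 0)
    (hNx' : N' *ᵥ x = 0) : N = N' := by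
  obtain ⟨ψ, hψ⟩ := exists_eq_vecMulVec_of_mulVec_eq_zero hx hNx hNx' h.det_eq_one
    (h.det_add _ hN) (h.det_add _ hN') (h.det_add _ (H.add_mem hN hN'))
  by_contra hne
  refine hrank ?_
  rcases hψ with hψ | hψ | hψ
  · exact hasRankOne_of_vecMulVec_mem (hψ ▸ hN) (hψ ▸ hN0)
  · exact hasRankOne_of_vecMulVec_mem (hψ ▸ hN') (hψ ▸ hN0')
  · exact hasRankOne_of_vecMulVec_mem (hψ ▸ H.add_mem hN hN')
      (hψ ▸ fun h0 => hne (CharTwo.add_eq_zero.1 h0))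

lemma eq_of_vecMul_eq_zero (h : IsInvertibleCoset A H) (hrank : ¬ HasRankOne H) (hN : N ∈ H)
    (hN' : N' ∈ H) (hN0 : N ≠ 0) (hN0' : N' ≠ 0) (hy : y ≠ 0) (hNy : y ᵥ* N = 0)
    (hNy' : y ᵥ* N' = 0) : N = N' := by
  rw [← hasRankOne_transposeSpace] at hrank
  rw [← mulVec_transpose] at hNy hNy'
  exact transpose_injective (h.transpose.eq_of_mulVec_eq_zero hrank (mem_transposeSpace.2 hN)
    (mem_transposeSpace.2 hN') (transpose_eq_zero.not.2 hN0) (transpose_eq_zero.not.2 hN0') hy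
    hNy hNy')

lemma exists_equiv_mulVec_eq_zero (h : IsInvertibleCoset A H) (hrank : ¬ HasRankOne H) :
    ∃ κ : Vec3 ≃ H, κ 0 = 0 ∧ ∀ x, (κ x).val *ᵥ x = 0 := by
  have hex (x : Vec3) : ∃ N : H, (N = 0 ↔ x = 0) ∧ N.val *ᵥ x = 0 := by
    by_cases hx : x = 0
    · exact ⟨0, by simp [hx], zero_mulVec x⟩
    · obtain ⟨N, hN, hN0, hNx⟩ := h.exists_mulVec_eq_zero hx
      exact ⟨⟨N, hN⟩, by simp [hx, hN0], hNx⟩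
  choose κ hκ0 hκ using hex
  have hinj : Function.Injective κ := fun x y hxy => by
    by_cases hx : x = 0
    · rw [hx, ← (hκ0 y).1 (hxy ▸ (hκ0 x).2 hx)]
    · have hy : y ≠ 0 := fun hy => hx ((hκ0 x).1 (hxy ▸ (hκ0 y).2 hy))
      by_contra hne
      obtain ⟨u, φ, huφ⟩ :=
        exists_eq_vecMulVec_of_mulVec_pair_eq_zero hx hy (Ne.symm hne) (hκ x) (hxy ▸ hκ y)
      exact hrank (hasRankOne_of_vecMulVec_mem (huφ ▸ (κ x).2)
        (huφ ▸ fun h0 => hx ((hκ0 x).1 (Subtype.ext h0))))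
  have := Nat.finite_of_card_ne_zero (α := H) (by rw [h.card_eq_eight]; decide)
  have hcard : Nat.card Vec3 = Nat.card H := by
    rw [h.card_eq_eight, Nat.card_eq_fintype_card]
    rfl
  exact ⟨.ofBijective κ ((Nat.bijective_iff_injective_and_card κ).2 ⟨hinj, hcard⟩),
    (hκ0 0).2 rfl, hκ⟩

lemma exists_map_add_ne (h : IsInvertibleCoset A H) (hleft : ¬ HasLeftKernel H) {κ : Vec3 ≃ H}
    (hκ : ∀ x, (κ x).val *ᵥ x = 0) : ∃ x y, κ (x + y) ≠ κ x + κ y := by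
  by_contra! hadd
  obtain ⟨G, hG⟩ := exists_eq_mul_crossMatrix (f := fun x => (κ x).val)
    (fun x y => congrArg Subtype.val (hadd x y)) hκ
  by_cases hunit : IsUnit G
  · obtain ⟨G, rfl⟩ := hunit
    obtain ⟨x, hx⟩ := exists_det_add_crossMatrix_ne_one (G⁻¹.val * A)
    refine hx ?_
    have hdet : (G.val * (G⁻¹.val * A + crossMatrix x)).det = 1 := by
      rw [mul_add, Units.mul_inv_cancel_left, ← hG]
      exact h.det_add _ (κ x).2
    rwa [det_mul, isUnit_iff_det_eq_one.1 G.isUnit, one_mul] at hdet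
  · rw [isUnit_iff_isUnit_det, isUnit_iff_ne_zero, not_not] at hunit
    obtain ⟨y, hy, hyG⟩ := exists_vecMul_eq_zero_iff.2 hunit
    refine hleft ⟨y, hy, fun N hN => ?_⟩
    obtain ⟨x, hx⟩ := κ.surjective ⟨N, hN⟩
    have hNG : N = G * crossMatrix x := by rw [← hG, hx]
    rw [hNG, ← vecMul_vecMul, hyG, zero_vecMul]

-- `P` sends the common nonzero values of `N` and `N'` on the basis `x, y, z` to the unit vectors.
lemma exists_units_diagonal_mem (h : IsInvertibleCoset A H) (hrank : ¬ HasRankOne H)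
    (hN : N ∈ H) (hN' : N' ∈ H) (hN0 : N ≠ 0) (hN0' : N' ≠ 0) (hne : N ≠ N')
    (hxyz : (of ![x, y, z]).det = 1) (hx : N *ᵥ x = 0) (hy : N' *ᵥ y = 0)
    (hz : N' *ᵥ z = N *ᵥ z) :
    ∃ P Q : Mat3ˣ, diagonal ![0, 1, 1] ∈ _root_.twoSidedMap P Q H ∧
      diagonal ![1, 0, 1] ∈ _root_.twoSidedMap P Q H := by
  set f : Fin 3 → Vec3 := ![N' *ᵥ x, N *ᵥ y, N *ᵥ z] with hf
  have hfdet : (of f).det = 1 := by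
    refine zmod_two_eq_one fun h0 => hne ?_
    obtain ⟨w, hw0, hw⟩ := exists_mulVec_eq_zero_iff.2 h0
    have hwf (i : Fin 3) : w ⬝ᵥ f i = 0 := (dotProduct_comm _ _).trans (congrFun hw i)
    refine h.eq_of_vecMul_eq_zero hrank hN hN' hN0 hN0' hw0
      (eq_zero_of_dotProduct_mulVec_eq_zero (hxyz ▸ isUnit_one) fun i => ?_)
      (eq_zero_of_dotProduct_mulVec_eq_zero (hxyz ▸ isUnit_one) fun i => ?_)
    · fin_cases i
      exacts [by simp [hx], hwf 1, hwf 2]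
    · fin_cases i
      exacts [hwf 0, by simp [hy], hz ▸ hwf 2]
  obtain ⟨Q, hQ⟩ := exists_unit_mulVec_single_eq (hxyz ▸ isUnit_one)
  obtain ⟨F, hF⟩ := exists_unit_mulVec_single_eq (hfdet ▸ isUnit_one)
  have hdiag {K : Mat3} {d : Vec3} (hK : ∀ i, K *ᵥ ![x, y, z] i = d i • f i) :
      F⁻¹.val * K * Q.val = diagonal d := by
    rw [mul_assoc, Units.inv_mul_eq_iff_eq_mul]
    refine ext_of_mulVec_single fun i => ?_
    rw [← mulVec_mulVec, ← mulVec_mulVec, hQ, hK, diagonal_mulVec_single, mul_one,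
      ← hF, ← mulVec_smul, ← Pi.single_smul, smul_eq_mul, mul_one]
  refine ⟨F⁻¹, Q, ?_, ?_⟩
  · rw [← hdiag (K := N)]
    · exact mul_mul_mem_twoSidedMap hN
    · intro i
      fin_cases i <;> simp [hf, hx]
  · rw [← hdiag (K := N')]
    · exact mul_mul_mem_twoSidedMap hN'
    · intro i
      fin_cases i <;> simp [hf, hy, hz]

lemma isClassified_of_diagonal_mem (h : IsInvertibleCoset A H) (h₁ : diagonal ![0, 1, 1] ∈ H)
    (h₂ : diagonal ![1, 0, 1] ∈ H) : IsClassified A H := by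
  obtain ⟨C, hC⟩ : IsUnit (!![0, 1, 0; 0, 0, 1; 1, 0, 0] : Mat3) :=
    isUnit_iff_det_eq_one.2 (by simp [det_fin_three])
  have hshape {N : Mat3} (hN : N ∈ H) : (A + N) * C.val - 1 ∈ SpaceT1 := by
    rw [hC]
    exact mul_sub_one_mem_spaceT1 fun b c =>
      (h.add_mem hN).det_add _ (H.add_mem (H.smul_mem b h₁) (H.smul_mem c h₂))
  have hA : A * C.val - 1 ∈ SpaceT1 := by simpa using hshape H.zero_mem
  refine h.isClassified_of_twoSidedMap_le (T := SpaceT1) (P := 1) (Q := C) (by simp [transList])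
    (by simpa using hA) ?_
  rintro _ ⟨N, hN, rfl⟩
  have hdiff := sub_mem (hshape hN) hA
  rw [sub_sub_sub_cancel_right, ← sub_mul, add_sub_cancel_left] at hdiff
  simpa using hdiff

lemma isClassified_of_not_hasRankOne (h : IsInvertibleCoset A H) (hleft : ¬ HasLeftKernel H)
    (hrank : ¬ HasRankOne H) : IsClassified A H := by
  obtain ⟨κ, hκ0, hκ⟩ := h.exists_equiv_mulVec_eq_zero hrank
  obtain ⟨x, y, hxy⟩ := h.exists_map_add_ne hleft hκ
  obtain ⟨hx, hy, hyx⟩ := ne_zero_of_map_add_ne hκ0 hxy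
  obtain ⟨z, hz⟩ := κ.surjective (κ x + κ y)
  have hzval : (κ z).val = κ x + κ y := congrArg Subtype.val hz
  have hsame : (κ y).val *ᵥ z = (κ x).val *ᵥ z := by
    have hκz := hκ z
    rw [hzval, add_mulVec] at hκz
    exact (CharTwo.add_eq_zero.1 hκz).symm
  have hker {v w : Vec3} (hvw : v ≠ w) : (κ v).val ≠ κ w :=
    Subtype.val_injective.ne (κ.injective.ne hvw)
  have hker0 {v : Vec3} (hv : v ≠ 0) : (κ v).val ≠ 0 := by
    simpa [hκ0] using hker hv
  obtain ⟨P, Q, h₁, h₂⟩ := h.exists_units_diagonal_mem hrank (κ x).2 (κ y).2 (hker0 hx)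
    (hker0 hy) (hker hyx.symm) (det_eq_one_of_map_eq_add hκ0 hxy hz) (hκ x) (hκ y) hsame
  exact .of_twoSided P Q ((h.twoSidedMap P Q).isClassified_of_diagonal_mem h₁ h₂)

end IsInvertibleCoset

lemma IsInvertibleCoset.isClassified {A : Mat3} {H : Submodule (ZMod 2) Mat3}
    (h : IsInvertibleCoset A H) : IsClassified A H := by
  by_cases hright : HasRightKernel H
  · exact h.isClassified_of_hasRightKernel hright
  by_cases hleft : HasLeftKernel H
  · exact h.isClassified_of_hasLeftKernel hleft
  by_cases hrank : HasRankOne H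
  · exact h.isClassified_of_hasRankOne hright hleft hrank
  · exact h.isClassified_of_not_hasRankOne hleft hrank

theorem classification_of_affine_subspaces_of_invertible_matrices :
    (∀ H ∈ transList, Module.finrank (ZMod 2) H = 3 ∧ ∀ M ∈ affOf H, IsUnit M) ∧
    (transList.map affOf).Pairwise (fun S T => ¬ AffEquiv S T) ∧
    ∀ S : Set (Matrix (Fin 3) (Fin 3) (ZMod 2)), IsAffine3 S → (∀ M ∈ S, IsUnit M) →
      ∃ H ∈ transList, AffEquiv S (affOf H) := by
  refine ⟨fun H hH => ⟨finrank_eq_three_of_mem_transList hH, fun M => isUnit_of_mem_affOf hH⟩,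
    pairwise_not_affEquiv_transList, ?_⟩
  rintro S ⟨A, H, hfinrank, rfl⟩ hS
  have hAH : IsInvertibleCoset A H :=
    ⟨hfinrank, fun M hM => isUnit_iff_det_eq_one.1 (hS _ ⟨M, hM, rfl⟩)⟩
  exact hAH.isClassified
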